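/- arXiv:1010.5077 — 4 statements merged into one kernel-verified Lean document; each statement's English description precedes it below -/
import Mathlib

section
/- Let g ∈ Γ be an element admitting a reduced expression whose first (leftmost) letter lies in Γ₂ ∖ Σ. Then g Γ₁ g⁻¹ ∩ Γ₁ ⊆ Σ; that is, for every x ∈ Γ₁, if g x g⁻¹ ∈ Γ₁ then g x g⁻¹ ∈ Σ. -/
universe u

/-- The two-element family of groups consisting of `Γ₁` (at index `true`) and `Γ₂`
(at index `false`). -/
def Fam (Γ₁ Γ₂ : Type u) : Bool → Type u := fun b => Bool.rec Γ₂ Γ₁ b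

instance famGroup {Γ₁ Γ₂ : Type u} [Group Γ₁] [Group Γ₂] : ∀ b, Group (Fam Γ₁ Γ₂ b) :=
  fun b => Bool.rec (motive := fun b => Group (Fam Γ₁ Γ₂ b)) ‹Group Γ₂› ‹Group Γ₁› b

/-- The family consisting of the two homomorphisms `ι₁ : Σ → Γ₁` and `ι₂ : Σ → Γ₂`;
the amalgamated free product `Γ = Γ₁ *_Σ Γ₂` is the pushout `Monoid.PushoutI (famHom ι₁ ι₂)`. -/
def famHom {S Γ₁ Γ₂ : Type u} [Group S] [Group Γ₁] [Group Γ₂]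
    (ι₁ : S →* Γ₁) (ι₂ : S →* Γ₂) : ∀ b, S →* Fam Γ₁ Γ₂ b :=
  fun b => Bool.rec (motive := fun b => S →* Fam Γ₁ Γ₂ b) ι₂ ι₁ b

/-- `IsReducedExpr A B S g w` expresses that the list `w` is a reduced expression for `g`
with respect to the subgroups `A` (the image of `Γ₁`), `B` (the image of `Γ₂`) and
`S` (the image of `Σ`): the product of `w` is `g`, every letter of `w` lies in
`(A \ S) ∪ (B \ S)`, and consecutive letters lie in different factors. -/
def IsReducedExpr {Γ : Type*} [Group Γ] (A B S : Subgroup Γ) (g : Γ) (w : List Γ) : Prop :=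
  w.prod = g ∧
  (∀ x ∈ w, (x ∈ A ∧ x ∉ S) ∨ (x ∈ B ∧ x ∉ S)) ∧
  w.Chain' (fun x y => ¬(x ∈ A ∧ y ∈ A) ∧ ¬(x ∈ B ∧ y ∈ B))

/-!
Write `g = a₁ ⋯ aₘ` in reduced form and conjugate `x` by the letters from the innermost `aₘ`
outwards. At every stage the conjugate either lies in the base group or has a reduced form that
starts and ends in the factor of the letter just used: if the next letter lies in another factor,
the conjugate gets longer at both ends, and an element of the base group is conjugated within the
factor of that letter. So `g x g⁻¹` is in the base group or has a reduced form starting in the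
factor of `a₁`, and in the latter case the normal form theorem keeps it out of every other factor.

The normal form theorem is applied in the amalgam of the images of the factors over the image of the
base group: its structure maps are inclusions of subgroups, and the pushout maps to it.
-/

section Pushout

open Monoid Monoid.PushoutI
open Monoid.CoprodI (NeWord Word)

variable {ι : Type*} {G : ι → Type*} {H : Type*} [∀ i, Group (G i)] [Group H]

/-- `HasReducedForm φ i j g` says that `g` is a nonempty product of letters that lie in factors of
the pushout but not in the base group, consecutive letters being taken from different factors, the
first one from the factor `i` and the last one from the factor `j`. -/
inductive HasReducedForm (φ : ∀ i, H →* G i) : ι → ι → PushoutI φ → Prop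
  | letter {i : ι} {a : PushoutI φ} (ha : a ∈ (of (φ := φ) i).range)
      (ha_base : a ∉ (base φ).range) : HasReducedForm φ i i a
  | cons {i j k : ι} {a g : PushoutI φ} (ha : a ∈ (of (φ := φ) i).range)
      (ha_base : a ∉ (base φ).range) (hij : i ≠ j) (hg : HasReducedForm φ j k g) :
      HasReducedForm φ i k (a * g)

variable {φ : ∀ i, H →* G i} {i j k l : ι} {a g x : PushoutI φ}

theorem base_range_le_of_range (φ : ∀ i, H →* G i) (i : ι) :
    (base φ).range ≤ (of (φ := φ) i).range := by
  rintro _ ⟨h, rfl⟩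
  exact ⟨φ i h, of_apply_eq_base φ i h⟩

/-- The inclusions of the image of the base group into the images of the factors; the normal
form theorem is applied to the pushout of this family, whose members are injective. -/
def baseInclusion (φ : ∀ i, H →* G i) (i : ι) : (base φ).range →* (of (φ := φ) i).range :=
  Subgroup.inclusion (base_range_le_of_range φ i)

theorem baseInclusion_injective (φ : ∀ i, H →* G i) (i : ι) :
    Function.Injective (baseInclusion φ i) :=
  Subgroup.inclusion_injective _

/-- The canonical map from a pushout to the amalgam of the images in it of its factors. -/
def toImageAmalgam (φ : ∀ i, H →* G i) : PushoutI φ →* PushoutI (baseInclusion φ) :=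
  lift (fun i => (of i).comp (of (φ := φ) i).rangeRestrict)
    ((base (baseInclusion φ)).comp (base φ).rangeRestrict)
    fun i => by
      ext h
      have image_eq : (of (φ := φ) i).rangeRestrict (φ i h) =
          baseInclusion φ i ((base φ).rangeRestrict h) :=
        Subtype.ext (of_apply_eq_base φ i h)
      simp only [MonoidHom.comp_apply, image_eq, of_apply_eq_base]

theorem toImageAmalgam_of_mem (ha : a ∈ (of (φ := φ) i).range) :
    toImageAmalgam φ a = of i ⟨a, ha⟩ := by
  obtain ⟨b, rfl⟩ := ha
  exact lift_of ..

theorem toImageAmalgam_mem_base_range (ha : a ∈ (base φ).range) :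
    toImageAmalgam φ a ∈ (base (baseInclusion φ)).range := by
  obtain ⟨h, rfl⟩ := ha
  exact ⟨(base φ).rangeRestrict h, by simp [toImageAmalgam]⟩

theorem exists_reduced_neWord_of_mem (ha : a ∈ (of (φ := φ) i).range)
    (ha_base : a ∉ (base φ).range) :
    ∃ v : NeWord (fun i => (of (φ := φ) i).range) i i,
      Reduced (baseInclusion φ) v.toWord ∧ ofCoprodI v.prod = toImageAmalgam φ a := by
  have ne_one : (⟨a, ha⟩ : (of (φ := φ) i).range) ≠ 1 := by
    intro h
    have ha_one : a = 1 := Subtype.ext_iff.1 h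
    exact ha_base (ha_one ▸ one_mem _)
  refine ⟨.singleton _ ne_one, fun y hy => ?_, by simp [toImageAmalgam_of_mem ha]⟩
  obtain rfl := List.mem_singleton.1 hy
  rintro ⟨b, hb⟩
  have hba : (b : PushoutI φ) = a := Subtype.ext_iff.1 hb
  exact ha_base (hba ▸ b.2)

namespace HasReducedForm

theorem exists_reduced_neWord (hg : HasReducedForm φ i j g) :
    ∃ v : NeWord (fun i => (of (φ := φ) i).range) i j,
      Reduced (baseInclusion φ) v.toWord ∧ ofCoprodI v.prod = toImageAmalgam φ g := by
  induction hg with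
  | letter ha ha_base => exact exists_reduced_neWord_of_mem ha ha_base
  | cons ha ha_base hij _ ih =>
    obtain ⟨u, u_reduced, u_prod⟩ := exists_reduced_neWord_of_mem ha ha_base
    obtain ⟨v, v_reduced, v_prod⟩ := ih
    refine ⟨.append u hij v, fun y hy => ?_, by simp [u_prod, v_prod]⟩
    exact (List.mem_append.1 hy).elim (u_reduced y) (v_reduced y)

theorem notMem_base_range (hg : HasReducedForm φ i j g) : g ∉ (base φ).range := by
  intro hg_base
  obtain ⟨v, v_reduced, v_prod⟩ := hg.exists_reduced_neWord
  have v_empty : v.toWord = .empty :=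
    v_reduced.eq_empty_of_mem_range (baseInclusion_injective φ)
      (v_prod ▸ toImageAmalgam_mem_base_range hg_base)
  exact v.toList_ne_nil (congrArg Word.toList v_empty)

theorem notMem_of_range (hg : HasReducedForm φ i j g) (hki : k ≠ i) :
    g ∉ (of (φ := φ) k).range := by
  intro hgk
  have inv_notMem : g⁻¹ ∉ (base φ).range := mt inv_mem_iff.1 hg.notMem_base_range
  have one_reduced : HasReducedForm φ k j (g⁻¹ * g) := .cons (inv_mem hgk) inv_notMem hki hg
  exact one_reduced.notMem_base_range (inv_mul_cancel g ▸ one_mem _)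

theorem mul_letter (hg : HasReducedForm φ i j g) (hjk : j ≠ k)
    (ha : a ∈ (of (φ := φ) k).range) (ha_base : a ∉ (base φ).range) :
    HasReducedForm φ i k (g * a) := by
  induction hg with
  | letter hb hb_base => exact .cons hb hb_base hjk (.letter ha ha_base)
  | cons hb hb_base hij _ ih => exact mul_assoc _ _ a ▸ .cons hb hb_base hij (ih hjk)

theorem conj_letter (hg : HasReducedForm φ j k g) (ha : a ∈ (of (φ := φ) i).range)
    (ha_base : a ∉ (base φ).range) (hij : i ≠ j) (hki : k ≠ i) :
    HasReducedForm φ i i (a * g * a⁻¹) :=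
  (cons ha ha_base hij hg).mul_letter hki (inv_mem ha) (mt inv_mem_iff.1 ha_base)

end HasReducedForm

theorem exists_hasReducedForm_prod {w : List (PushoutI φ)} (ha : a ∈ (of (φ := φ) i).range)
    (hletter : ∀ y ∈ a :: w, (∃ m, y ∈ (of (φ := φ) m).range) ∧ y ∉ (base φ).range)
    (hchain : (a :: w).IsChain fun y z =>
      ∀ m, ¬(y ∈ (of (φ := φ) m).range ∧ z ∈ (of (φ := φ) m).range)) :
    ∃ j, HasReducedForm φ i j (a :: w).prod := by
  induction w generalizing a i with
  | nil =>
    have ha_base : a ∉ (base φ).range := (hletter a List.mem_cons_self).2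
    exact ⟨i, by simpa only [List.prod_singleton] using .letter ha ha_base⟩
  | cons b w ih =>
    obtain ⟨⟨-, ha_base⟩, hletter_tail⟩ := List.forall_mem_cons.1 hletter
    obtain ⟨m, hb⟩ := (hletter_tail b List.mem_cons_self).1
    obtain ⟨hab, hchain_tail⟩ := List.isChain_cons_cons.1 hchain
    obtain ⟨j, htail⟩ := ih hb hletter_tail hchain_tail
    have him : i ≠ m := by
      rintro rfl
      exact hab i ⟨ha, hb⟩
    exact ⟨j, List.prod_cons (a := a) ▸ .cons ha ha_base him htail⟩

theorem mem_base_range_or_hasReducedForm (ha : a ∈ (of (φ := φ) i).range) :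
    a ∈ (base φ).range ∨ HasReducedForm φ i i a :=
  (em _).imp_right (.letter ha)

theorem conj_letter_mem_base_range_or_hasReducedForm (ha : a ∈ (of (φ := φ) i).range)
    (ha_base : a ∉ (base φ).range) (hij : i ≠ j)
    (hx : x ∈ (base φ).range ∨ HasReducedForm φ j j x) :
    a * x * a⁻¹ ∈ (base φ).range ∨ HasReducedForm φ i i (a * x * a⁻¹) := by
  rcases hx with hx_base | hx_red
  · have hxi : x ∈ (of (φ := φ) i).range := base_range_le_of_range φ i hx_base
    exact mem_base_range_or_hasReducedForm (mul_mem (mul_mem ha hxi) (inv_mem ha))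
  · exact .inr (hx_red.conj_letter ha ha_base hij hij.symm)

theorem HasReducedForm.conj_mem_base_range_or_hasReducedForm (hg : HasReducedForm φ i j g)
    (hx : x ∈ (of (φ := φ) l).range) :
    g * x * g⁻¹ ∈ (base φ).range ∨ HasReducedForm φ i i (g * x * g⁻¹) := by
  induction hg with
  | @letter i a ha ha_base =>
    obtain rfl | hil := eq_or_ne i l
    · exact mem_base_range_or_hasReducedForm (mul_mem (mul_mem ha hx) (inv_mem ha))
    · exact conj_letter_mem_base_range_or_hasReducedForm ha ha_base hil
        (mem_base_range_or_hasReducedForm hx)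
  | @cons i _ _ a g ha ha_base hij _ ih =>
    have conj_mul : a * g * x * (a * g)⁻¹ = a * (g * x * g⁻¹) * a⁻¹ := by group
    exact conj_mul ▸ conj_letter_mem_base_range_or_hasReducedForm ha ha_base hij ih

theorem stmt0_general (hg : HasReducedForm φ i j g) (hki : k ≠ i)
    (hx : x ∈ (of (φ := φ) l).range) (hconj : g * x * g⁻¹ ∈ (of (φ := φ) k).range) :
    g * x * g⁻¹ ∈ (base φ).range :=
  (hg.conj_mem_base_range_or_hasReducedForm hx).resolve_right fun conj_reduced =>
    conj_reduced.notMem_of_range hki hconj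

end Pushout

theorem IsReducedExpr.exists_hasReducedForm {S Γ₁ Γ₂ : Type u} [Group S] [Group Γ₁] [Group Γ₂]
    {ι₁ : S →* Γ₁} {ι₂ : S →* Γ₂} {g a : Monoid.PushoutI (famHom ι₁ ι₂)}
    {w : List (Monoid.PushoutI (famHom ι₁ ι₂))} {b : Bool}
    (hw : IsReducedExpr (Monoid.PushoutI.of (φ := famHom ι₁ ι₂) true).range
      (Monoid.PushoutI.of (φ := famHom ι₁ ι₂) false).range
      (Monoid.PushoutI.base (famHom ι₁ ι₂)).range g w)
    (hhead : w.head? = some a) (ha : a ∈ (Monoid.PushoutI.of (φ := famHom ι₁ ι₂) b).range) :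
    ∃ c, HasReducedForm (famHom ι₁ ι₂) b c g := by
  obtain ⟨rfl, hletter, hchain⟩ := hw
  obtain ⟨t, rfl⟩ := List.head?_eq_some_iff.1 hhead
  refine exists_hasReducedForm_prod ha (fun y hy => ?_)
    (hchain.imp fun _ _ hyz => Bool.forall_bool.2 hyz.symm)
  exact (hletter y hy).elim (fun h => ⟨⟨true, h.1⟩, h.2⟩) (fun h => ⟨⟨false, h.1⟩, h.2⟩)

/-- If `g ∈ Γ = Γ₁ *_Σ Γ₂` admits a reduced expression whose first letter
lies in `Γ₂ ∖ Σ`, then `g Γ₁ g⁻¹ ∩ Γ₁ ⊆ Σ`. -/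
theorem stmt0 {S Γ₁ Γ₂ : Type u} [Group S] [Group Γ₁] [Group Γ₂]
    (ι₁ : S →* Γ₁) (ι₂ : S →* Γ₂)
    (hι₁ : Function.Injective ι₁) (hι₂ : Function.Injective ι₂)
    (φ₁ : Γ₁ →* Monoid.PushoutI (famHom ι₁ ι₂))
    (φ₂ : Γ₂ →* Monoid.PushoutI (famHom ι₁ ι₂))
    (hφ₁ : φ₁ = Monoid.PushoutI.of (φ := famHom ι₁ ι₂) true)
    (hφ₂ : φ₂ = Monoid.PushoutI.of (φ := famHom ι₁ ι₂) false)
    (g : Monoid.PushoutI (famHom ι₁ ι₂)) (w : List (Monoid.PushoutI (famHom ι₁ ι₂)))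
    (hred : IsReducedExpr φ₁.range φ₂.range (φ₁.comp ι₁).range g w)
    (hhead : ∃ x, w.head? = some x ∧ x ∈ φ₂.range ∧ x ∉ (φ₁.comp ι₁).range) :
    ∀ x ∈ φ₁.range, g * x * g⁻¹ ∈ φ₁.range → g * x * g⁻¹ ∈ (φ₁.comp ι₁).range := by
  have base_range_eq : (φ₁.comp ι₁).range = (Monoid.PushoutI.base (famHom ι₁ ι₂)).range := by
    rw [hφ₁]
    exact congrArg MonoidHom.range (Monoid.PushoutI.of_comp_eq_base (φ := famHom ι₁ ι₂) true)
  rw [base_range_eq] at hred ⊢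
  subst hφ₁ hφ₂
  obtain ⟨a, ha_head, ha, -⟩ := hhead
  obtain ⟨c, hg⟩ := hred.exists_hasReducedForm ha_head ha
  exact fun x hx hconj => stmt0_general hg (by decide) hx hconj
end

section
/- The images of Γ₁ and Γ₂ in the amalgamated free product Γ intersect exactly in the image of Σ: φ₁(Γ₁) ∩ φ₂(Γ₂) = φ₁(ι₁(Σ)) (equivalently = φ₂(ι₂(Σ))) as subgroups of Γ. -/
universe u

/-!
When the maps of the diagram are injective, the intersection of two factors is computed in
`Monoid.PushoutI.inf_of_range_eq_base_range` from the normal form theorem. An arbitrary diagram of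
groups reduces to that case: replacing the base and every factor by its image in the pushout makes
all maps inclusions, and the original pushout is a retract of the pushout of the images.
-/

section PushoutOfImages

open Monoid.PushoutI

variable {ι H : Type*} {G : ι → Type*} [Group H] [∀ i, Group (G i)] (φ : ∀ i, H →* G i)

/-- The image of the `i`-th factor in the pushout of `φ`. -/
abbrev factorImage (i : ι) : Subgroup (Monoid.PushoutI φ) :=
  (of (φ := φ) i).range

theorem range_base_le_factorImage (i : ι) : (base φ).range ≤ factorImage φ i := by
  rw [← of_comp_eq_base i, MonoidHom.range_comp]
  exact Subgroup.map_le_range _ _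

/-- The diagram formed by the images of the base group and of the factors in the pushout of `φ`,
with inclusions as its maps. It replaces `φ` by a diagram of injective homomorphisms. -/
def imageDiagram (i : ι) : (base φ).range →* factorImage φ i :=
  Subgroup.inclusion (range_base_le_factorImage φ i)

theorem imageDiagram_injective (i : ι) : Function.Injective (imageDiagram φ i) :=
  Subgroup.inclusion_injective _

theorem imageDiagram_rangeRestrict (i : ι) (h : H) :
    imageDiagram φ i ((base φ).rangeRestrict h) = (of (φ := φ) i).rangeRestrict (φ i h) :=
  Subtype.ext (of_apply_eq_base φ i h).symm

/-- The canonical homomorphism from the pushout of `φ` to the pushout of its image diagram. -/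
def toImagePushout : Monoid.PushoutI φ →* Monoid.PushoutI (imageDiagram φ) :=
  lift (fun i ↦ (of (φ := imageDiagram φ) i).comp (of (φ := φ) i).rangeRestrict)
    ((base (imageDiagram φ)).comp (base φ).rangeRestrict) fun i ↦ by
      ext h
      simp only [MonoidHom.comp_apply, ← imageDiagram_rangeRestrict, of_apply_eq_base]

/-- The homomorphism from the pushout of the image diagram to the pushout of `φ` induced by the
inclusions of the images. It is a left inverse of `toImagePushout φ`. -/
def ofImagePushout : Monoid.PushoutI (imageDiagram φ) →* Monoid.PushoutI φ :=
  lift (fun i ↦ (factorImage φ i).subtype) (base φ).range.subtype fun _ ↦ rfl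

theorem toImagePushout_of (i : ι) (g : G i) :
    toImagePushout φ (of i g) = of (φ := imageDiagram φ) i ((of (φ := φ) i).rangeRestrict g) :=
  lift_of _ _ _ _

theorem toImagePushout_base (h : H) :
    toImagePushout φ (base φ h) = base (imageDiagram φ) ((base φ).rangeRestrict h) :=
  lift_base _ _ _ _

theorem ofImagePushout_of (i : ι) (x : factorImage φ i) :
    ofImagePushout φ (of (φ := imageDiagram φ) i x) = x :=
  lift_of (φ := imageDiagram φ) _ _ _ x

theorem ofImagePushout_base (x : (base φ).range) :
    ofImagePushout φ (base (imageDiagram φ) x) = x :=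
  lift_base _ _ _ _

theorem ofImagePushout_comp_toImagePushout :
    (ofImagePushout φ).comp (toImagePushout φ) = MonoidHom.id (Monoid.PushoutI φ) := by
  ext x
  · simp only [MonoidHom.comp_apply, toImagePushout_of, ofImagePushout_of,
      MonoidHom.coe_rangeRestrict, MonoidHom.id_apply]
  · simp only [MonoidHom.comp_apply, toImagePushout_base, ofImagePushout_base,
      MonoidHom.coe_rangeRestrict, MonoidHom.id_apply]

variable {φ}

theorem toImagePushout_mem_factorImage {i : ι} {x : Monoid.PushoutI φ}
    (hx : x ∈ factorImage φ i) : toImagePushout φ x ∈ factorImage (imageDiagram φ) i := by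
  obtain ⟨g, rfl⟩ := hx
  exact ⟨_, (toImagePushout_of φ i g).symm⟩

theorem factorImage_inf_factorImage_eq_range_base {i j : ι} (hij : i ≠ j) :
    factorImage φ i ⊓ factorImage φ j = (base φ).range := by
  refine le_antisymm (fun x ⟨hxi, hxj⟩ ↦ ?_)
    (le_inf (range_base_le_factorImage φ i) (range_base_le_factorImage φ j))
  obtain ⟨s, hs⟩ : toImagePushout φ x ∈ (base (imageDiagram φ)).range := by
    rw [← inf_of_range_eq_base_range (imageDiagram_injective φ) hij]
    exact ⟨toImagePushout_mem_factorImage hxi, toImagePushout_mem_factorImage hxj⟩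
  have hsx : (s : Monoid.PushoutI φ) = x := by
    rw [← ofImagePushout_base, hs]
    exact DFunLike.congr_fun (ofImagePushout_comp_toImagePushout φ) x
  exact hsx ▸ s.2

end PushoutOfImages

theorem stmt2_general {S Γ₁ Γ₂ : Type u} [Group S] [Group Γ₁] [Group Γ₂]
    (ι₁ : S →* Γ₁) (ι₂ : S →* Γ₂)
    (φ₁ : Γ₁ →* Monoid.PushoutI (famHom ι₁ ι₂))
    (φ₂ : Γ₂ →* Monoid.PushoutI (famHom ι₁ ι₂))
    (hφ₁ : φ₁ = Monoid.PushoutI.of (φ := famHom ι₁ ι₂) true)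
    (hφ₂ : φ₂ = Monoid.PushoutI.of (φ := famHom ι₁ ι₂) false) :
    φ₁.range ⊓ φ₂.range = (φ₁.comp ι₁).range ∧
    φ₁.range ⊓ φ₂.range = (φ₂.comp ι₂).range := by
  subst hφ₁ hφ₂
  have inf_eq_base : factorImage (famHom ι₁ ι₂) true ⊓ factorImage (famHom ι₁ ι₂) false =
      (Monoid.PushoutI.base (famHom ι₁ ι₂)).range :=
    factorImage_inf_factorImage_eq_range_base (by decide)
  have base_eq (b : Bool) : (Monoid.PushoutI.base (famHom ι₁ ι₂)).range =
      ((Monoid.PushoutI.of b).comp (famHom ι₁ ι₂ b)).range := by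
    rw [Monoid.PushoutI.of_comp_eq_base]
  exact ⟨inf_eq_base.trans (base_eq true), inf_eq_base.trans (base_eq false)⟩

/-- In the amalgamated free product `Γ = Γ₁ *_Σ Γ₂`, the images of `Γ₁`
and `Γ₂` intersect exactly in the image of `Σ`:
`φ₁(Γ₁) ∩ φ₂(Γ₂) = φ₁(ι₁(Σ)) = φ₂(ι₂(Σ))`. -/
theorem stmt2 {S Γ₁ Γ₂ : Type u} [Group S] [Group Γ₁] [Group Γ₂]
    (ι₁ : S →* Γ₁) (ι₂ : S →* Γ₂)
    (hι₁ : Function.Injective ι₁) (hι₂ : Function.Injective ι₂)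
    (φ₁ : Γ₁ →* Monoid.PushoutI (famHom ι₁ ι₂))
    (φ₂ : Γ₂ →* Monoid.PushoutI (famHom ι₁ ι₂))
    (hφ₁ : φ₁ = Monoid.PushoutI.of (φ := famHom ι₁ ι₂) true)
    (hφ₂ : φ₂ = Monoid.PushoutI.of (φ := famHom ι₁ ι₂) false) :
    φ₁.range ⊓ φ₂.range = (φ₁.comp ι₁).range ∧
    φ₁.range ⊓ φ₂.range = (φ₂.comp ι₂).range :=
  stmt2_general ι₁ ι₂ φ₁ φ₂ hφ₁ hφ₂
end

section
/- In the HNN extension Γ = HNN(H, Σ, θ) with stable letter t, one has t⁻¹ H t ∩ H = Σ, and for every integer n ≥ 1, t⁻ⁿ H tⁿ ∩ H ⊆ Σ (all groups being identified with their images in Γ). -/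
/-!
If `g = t⁻ⁿ h tⁿ` with `g, h ∈ H` and `n ≥ 1`, then `g t⁻ⁿ` and `t⁻ⁿ h` are two words for the same
element of `Γ`. All their stable letters have the same sign, so both words are reduced whatever `g`
and `h` are, and the normal form theorem, of which Britton's lemma is a special case, says that
their heads `g` and `1` lie in the same left coset of `Σ`.
-/

open HNNExtension HNNExtension.NormalWord

section HNN

variable {G : Type*} [Group G] {A B : Subgroup G} (φ : A ≃* B)

/-- The word `g tᵘ x₁ tᵘ x₂ ⋯ tᵘ xₖ`, for `l = [x₁, …, xₖ]`, in which every stable letter has the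
same exponent `u = ±1`. It is reduced because no `tᵘ` is followed by a `t⁻ᵘ`. -/
def constSignWord (A B : Subgroup G) (u : ℤˣ) (g : G) (l : List G) : ReducedWord G A B where
  head := g
  toList := l.map (u, ·)
  chain := (List.isChain_map _).2 (List.pairwise_of_forall fun _ _ _ ↦ rfl).isChain

theorem prod_constSignWord (u : ℤˣ) (g : G) (l : List G) :
    (constSignWord A B u g l).prod φ =
      of g * (l.map fun x ↦ (t ^ (u : ℤ) * of x : HNNExtension G A B φ)).prod := by
  simp only [ReducedWord.prod, constSignWord, List.map_map, Function.comp_def]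

theorem inv_mul_mem_toSubgroup_of_prod_constSignWord_eq {u : ℤˣ} {g g' : G} {l l' : List G}
    (hl : l ≠ [])
    (h : (constSignWord A B u g l).prod φ = (constSignWord A B u g' l').prod φ) :
    g⁻¹ * g' ∈ toSubgroup A B (-u) := by
  refine (HNNExtension.ReducedWord.map_fst_eq_and_of_prod_eq φ h).2 u ?_
  simp [constSignWord, List.head?_eq_some_head hl]

theorem mem_toSubgroup_of_of_mul_pow_eq_pow_mul_of {u : ℤˣ} {n : ℕ} (hn : n ≠ 0) {g h : G}
    (hgh : (of g * (t ^ (u : ℤ)) ^ n : HNNExtension G A B φ) = (t ^ (u : ℤ)) ^ n * of h) :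
    g ∈ toSubgroup A B (-u) := by
  obtain ⟨n, rfl⟩ := Nat.exists_eq_succ_of_ne_zero hn
  have prod_eq : (constSignWord A B u g (List.replicate (n + 1) 1)).prod φ =
      (constSignWord A B u 1 (List.replicate n 1 ++ [h])).prod φ := by
    simpa [prod_constSignWord, pow_succ, mul_assoc] using hgh
  simpa using inv_mul_mem_toSubgroup_of_prod_constSignWord_eq φ (by simp) prod_eq

theorem map_conj_pow_range_of_inf_range_of_le (u : ℤˣ) {n : ℕ} (hn : n ≠ 0) :
    (of : G →* HNNExtension G A B φ).range.map (MulAut.conj ((t ^ (u : ℤ)) ^ n)).toMonoidHom ⊓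
      of.range ≤ (toSubgroup A B (-u)).map of := by
  rintro _ ⟨⟨_, ⟨h, rfl⟩, conj_eq⟩, g, rfl⟩
  refine ⟨g, mem_toSubgroup_of_of_mul_pow_eq_pow_mul_of φ hn (h := h) ?_, rfl⟩
  rw [← conj_eq, MulEquiv.coe_toMonoidHom, MulAut.conj_apply, inv_mul_cancel_right]

theorem of_toSubgroupEquiv_eq_conj (u : ℤˣ) (a : toSubgroup A B u) :
    (of (toSubgroupEquiv φ u a : G) : HNNExtension G A B φ) =
      MulAut.conj (t ^ (u : ℤ)) (of (a : G)) := by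
  rcases Int.units_eq_one_or u with rfl | rfl
  · simp only [MulAut.conj_apply, Units.val_one, zpow_one]
    exact equiv_eq_conj a
  · simp only [MulAut.conj_apply, Units.val_neg, Units.val_one, zpow_neg_one, inv_inv]
    exact equiv_symm_eq_conj a

theorem map_of_toSubgroup_le_map_conj_range_of (u : ℤˣ) :
    (toSubgroup A B (-u)).map (of : G →* HNNExtension G A B φ) ≤
      of.range.map (MulAut.conj (t ^ (u : ℤ))).toMonoidHom := by
  rintro _ ⟨a, ha, rfl⟩
  refine ⟨of (toSubgroupEquiv φ (-u) ⟨a, ha⟩ : G), ⟨_, rfl⟩, ?_⟩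
  simp [of_toSubgroupEquiv_eq_conj]

theorem map_conj_range_of_inf_range_of (u : ℤˣ) :
    (of : G →* HNNExtension G A B φ).range.map (MulAut.conj (t ^ (u : ℤ))).toMonoidHom ⊓
      of.range = (toSubgroup A B (-u)).map of :=
  le_antisymm (by simpa using map_conj_pow_range_of_inf_range_of_le φ u one_ne_zero)
    (le_inf (map_of_toSubgroup_le_map_conj_range_of φ u) (Subgroup.map_le_range _ _))

end HNN

/-- In the HNN extension `Γ = HNN(H, Σ, θ)` with stable letter `t`
(so that `t σ t⁻¹ = θ(σ)` for all `σ ∈ Σ`), one has `t⁻¹ H t ∩ H = Σ`, and for every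
`n ≥ 1`, `t⁻ⁿ H tⁿ ∩ H ⊆ Σ` (all groups identified with their images in `Γ`). -/
theorem stmt3 {H : Type*} [Group H] (S : Subgroup H) (θ : S →* H)
    (hθ : Function.Injective θ)
    (of : H →* HNNExtension H S θ.range (MonoidHom.ofInjective hθ))
    (t : HNNExtension H S θ.range (MonoidHom.ofInjective hθ))
    (hof : of = HNNExtension.of) (ht : t = HNNExtension.t) :
    (Subgroup.map (MulAut.conj t⁻¹).toMonoidHom of.range ⊓ of.range = S.map of) ∧
    (∀ n : ℕ, 1 ≤ n →
      Subgroup.map (MulAut.conj (t⁻¹ ^ n)).toMonoidHom of.range ⊓ of.range ≤ S.map of) := by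
  subst hof ht
  have t_inv_eq : (HNNExtension.t : HNNExtension H S θ.range (MonoidHom.ofInjective hθ))⁻¹ =
      HNNExtension.t ^ ((-1 : ℤˣ) : ℤ) := by simp
  rw [t_inv_eq]
  exact ⟨map_conj_range_of_inf_range_of _ (-1), fun n hn ↦
    map_conj_pow_range_of_inf_range_of_le _ (-1) (Nat.one_le_iff_ne_zero.1 hn)⟩
end

section
/- The group Γ = SL(3,ℤ) *_Σ SL(3,ℤ) is an ICC group: for every g ∈ Γ with g ≠ e, the conjugacy class { h g h⁻¹ : h ∈ Γ } is infinite. -/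
universe u

open Matrix

/-- `Σ < SL(3,ℤ)`: the subgroup of matrices `g` with `g₃₁ = g₃₂ = 0`
(third row, first and second columns). -/
def Sigma3 : Subgroup (Matrix.SpecialLinearGroup (Fin 3) ℤ) where
  carrier := {g | g.1 2 0 = 0 ∧ g.1 2 1 = 0}
  one_mem' := by simp
  mul_mem' := by
    rintro a b ⟨ha0, ha1⟩ ⟨hb0, hb1⟩
    constructor <;>
      simp [Matrix.SpecialLinearGroup.coe_mul, Matrix.mul_apply, Fin.sum_univ_three,
        ha0, ha1, hb0, hb1]
  inv_mem' := by
    rintro a ⟨ha0, ha1⟩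
    constructor <;>
      simp [Matrix.SpecialLinearGroup.coe_inv, Matrix.adjugate_fin_three, ha0, ha1]

/-- `P ≤ Σ`: the subgroup of matrices `[[1,0,x],[0,1,y],[0,0,1]]` with `x, y ∈ ℤ`. -/
def P3 : Subgroup (Matrix.SpecialLinearGroup (Fin 3) ℤ) where
  carrier := {g | ∃ x y : ℤ, g.1 = !![1, 0, x; 0, 1, y; 0, 0, 1]}
  one_mem' := ⟨0, 0, by
    ext i j
    fin_cases i <;> fin_cases j <;>
      simp [Matrix.vecHead, Matrix.vecTail]⟩
  mul_mem' := by
    rintro a b ⟨x, y, ha⟩ ⟨x', y', hb⟩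
    refine ⟨x + x', y + y', ?_⟩
    have : a.1 * b.1 = !![1, 0, x + x'; 0, 1, y + y'; 0, 0, 1] := by
      rw [ha, hb]
      ext i j
      fin_cases i <;> fin_cases j <;>
        simp [Matrix.mul_apply, Fin.sum_univ_three, Matrix.vecHead, Matrix.vecTail, add_comm]
    simpa using this
  inv_mem' := by
    rintro a ⟨x, y, ha⟩
    refine ⟨-x, -y, ?_⟩
    rw [Matrix.SpecialLinearGroup.coe_inv, ha]
    ext i j
    fin_cases i <;> fin_cases j <;>
      simp [Matrix.adjugate_fin_three, Matrix.vecHead, Matrix.vecTail]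


/-!
Every element of an amalgamated product outside the amalgamated subgroup `H` is conjugate to an
element with a reduced expression whose first and last letters lie in the same factor, as long as
one factor contains `H` with index different from `2`. Conjugating such an expression by a letter
of another factor lengthens it by two, and the length of a reduced expression depends only on the
element it represents, so the conjugacy class is infinite. An element of `H` outside the normal
core of `H` in some factor is conjugate to an element outside `H`. Finally, `Σ` has trivial normal
core: if all conjugates of `A` lie in `Σ`, then `e₁`, `e₂`, `e₃` and the sums `e₃ + eⱼ` are left
eigenvectors of `A`, so `A` is scalar, and `1` is the only scalar in `SL(3,ℤ)`.
-/

open Monoid Monoid.CoprodI Monoid.PushoutI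

/-- The infinite conjugacy class property of a group. -/
def IsICC (G : Type*) [Group G] : Prop :=
  ∀ g : G, g ≠ 1 → (conjugatesOf g).Infinite

section Amalgam

variable {ι : Type*} {G : ι → Type*} {H : Type*} [∀ i, Group (G i)] [Group H]
  {φ : ∀ i, H →* G i} {i j k : ι}

lemma reduced_singleton_iff {x : G i} (hx : x ≠ 1) :
    Reduced φ (NeWord.singleton x hx).toWord ↔ x ∉ (φ i).range := by
  simp [Reduced, NeWord.toWord]

lemma reduced_append_iff {l : ι} {w₁ : NeWord G i j} {hjk : j ≠ k} {w₂ : NeWord G k l} :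
    Reduced φ (w₁.append hjk w₂).toWord ↔ Reduced φ w₁.toWord ∧ Reduced φ w₂.toWord := by
  simp only [Reduced, NeWord.toWord, NeWord.toList, List.mem_append, or_imp, forall_and]

lemma reduced_inv {w : NeWord G i j} (hw : Reduced φ w.toWord) : Reduced φ w.inv.toWord := by
  induction w with
  | singleton x hx =>
    exact (reduced_singleton_iff _).2 (by simpa using (reduced_singleton_iff hx).1 hw)
  | append w₁ hne w₂ ih₁ ih₂ =>
    obtain ⟨hw₁, hw₂⟩ := reduced_append_iff.1 hw
    exact reduced_append_iff.2 ⟨ih₂ hw₂, ih₁ hw₁⟩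

lemma head_notMem_range_of_reduced {w : NeWord G i j} (hw : Reduced φ w.toWord) :
    w.head ∉ (φ i).range :=
  hw ⟨i, w.head⟩ (List.mem_of_mem_head? w.toList_head?)

lemma reduced_replaceHead {w : NeWord G i j} (hw : Reduced φ w.toWord) {x : G i}
    (hx : x ∉ (φ i).range) (hx1 : x ≠ 1) : Reduced φ (w.replaceHead x hx1).toWord := by
  induction w with
  | singleton => exact (reduced_singleton_iff hx1).2 hx
  | append w₁ hne w₂ ih₁ _ =>
    obtain ⟨hw₁, hw₂⟩ := reduced_append_iff.1 hw
    exact reduced_append_iff.2 ⟨ih₁ hw₁ hx hx1, hw₂⟩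

lemma reduced_toWord_of_normalWord {d : NormalWord.Transversal φ} (w : NormalWord d) :
    Reduced φ w.toWord := by
  rintro ⟨i, x⟩ hx hxrange
  have huniq := (d.compl i).1 (a₁ := (⟨x, hxrange⟩, ⟨1, d.one_mem i⟩))
    (a₂ := (1, ⟨x, w.normalized i x hx⟩)) (by simp)
  exact w.ne_one _ hx (by simpa using congrArg (fun p => (p.1 : G i)) huniq)

lemma exists_reduced_of_notMem_range_base (hφ : ∀ i, Function.Injective (φ i)) {g : PushoutI φ}
    (hg : g ∉ (base φ).range) :
    ∃ i j, ∃ w : NeWord G i j, Reduced φ w.toWord ∧ ofCoprodI w.prod = g := by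
  classical
  obtain ⟨d⟩ := NormalWord.transversal_nonempty φ hφ
  obtain ⟨v, rfl⟩ : ∃ v : NormalWord d, v.prod = g := NormalWord.equiv.symm.surjective g
  have hv : v.prod = base φ v.head * ofCoprodI v.toWord.prod := rfl
  have hne : v.toWord ≠ Word.empty := fun h => hg ⟨v.head, by simp [hv, h]⟩
  obtain ⟨i, j, w, hwv⟩ := NeWord.of_word _ hne
  have hw : Reduced φ w.toWord := hwv ▸ reduced_toWord_of_normalWord v
  have hhead : φ i v.head * w.head ∉ (φ i).range := fun h =>
    head_notMem_range_of_reduced hw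
      ((Subgroup.mul_mem_cancel_left _ (MonoidHom.mem_range.2 ⟨v.head, rfl⟩)).1 h)
  refine ⟨i, j, w.mulHead _ (ne_of_mem_of_not_mem (one_mem _) hhead).symm,
    reduced_replaceHead hw hhead _, ?_⟩
  rw [NeWord.mulHead_prod, map_mul, ofCoprodI_of, of_apply_eq_base, hv, ← hwv, NeWord.prod]

lemma length_eq_of_reduced_of_prod_eq (hφ : ∀ i, Function.Injective (φ i)) {w w' : Word G}
    (hw : Reduced φ w) (hw' : Reduced φ w')
    (h : (ofCoprodI w.prod : PushoutI φ) = ofCoprodI w'.prod) :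
    w.toList.length = w'.toList.length := by
  obtain ⟨d⟩ := NormalWord.transversal_nonempty φ hφ
  obtain ⟨v, hv, hvw⟩ := hw.exists_normalWord_prod_eq d
  obtain ⟨v', hv', hvw'⟩ := hw'.exists_normalWord_prod_eq d
  obtain rfl : v = v' := NormalWord.prod_injective (by rw [hv, hv', h])
  simpa using congrArg List.length (hvw.symm.trans hvw')

lemma exists_reduced_isConj_of_ne {w : NeWord G i j} (hw : Reduced φ w.toWord)
    (hki : k ≠ i) (hkj : k ≠ j) (hk : (φ k).range ≠ ⊤) :
    ∃ u : NeWord G k k, Reduced φ u.toWord ∧ u.toList.length = w.toList.length + 2 ∧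
      IsConj (ofCoprodI w.prod : PushoutI φ) (ofCoprodI u.prod) := by
  obtain ⟨c, hc⟩ := SetLike.exists_not_mem_of_ne_top _ hk
  have hc1 : c ≠ 1 := (ne_of_mem_of_not_mem (one_mem _) hc).symm
  refine ⟨((NeWord.singleton c hc1).append hki w).append hkj.symm
    (.singleton c⁻¹ (inv_ne_one.2 hc1)), ?_, ?_, isConj_iff.2 ⟨of k c, ?_⟩⟩
  · simp only [reduced_append_iff, reduced_singleton_iff, inv_mem_iff]
    exact ⟨⟨hc, hw⟩, hc⟩
  · simp only [NeWord.toList, List.length_append, List.length_singleton]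
    omega
  · simp

lemma exists_reduced_isConj_of_index_ne_two {w : NeWord G i j} (hw : Reduced φ w.toWord)
    (hij : i ≠ j) (hi : (φ i).range.index ≠ 2) :
    ∃ u : NeWord G i i, Reduced φ u.toWord ∧
      IsConj (ofCoprodI w.prod : PushoutI φ) (ofCoprodI u.prod) := by
  obtain ⟨a, haw, ha⟩ : ∃ a, a * w.head ∉ (φ i).range ∧ a ∉ (φ i).range := by
    by_contra! h
    exact hi (Subgroup.index_eq_two_iff_exists_notMem_and.2
      ⟨w.head, head_notMem_range_of_reduced hw, fun b => or_iff_not_imp_left.2 (h b)⟩)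
  have ha1 : a ≠ 1 := (ne_of_mem_of_not_mem (one_mem _) ha).symm
  refine ⟨(w.mulHead a (ne_of_mem_of_not_mem (one_mem _) haw).symm).append hij.symm
    (.singleton a⁻¹ (inv_ne_one.2 ha1)), ?_, isConj_iff.2 ⟨of i a, ?_⟩⟩
  · simp only [reduced_append_iff, reduced_singleton_iff, inv_mem_iff]
    exact ⟨reduced_replaceHead hw haw _, ha⟩
  · simp

lemma exists_reduced_isConj_same_ends (hproper : ∀ i, (φ i).range ≠ ⊤)
    (hindex : ∃ i, (φ i).range.index ≠ 2) {w : NeWord G i j} (hw : Reduced φ w.toWord) :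
    ∃ k, ∃ u : NeWord G k k, Reduced φ u.toWord ∧
      IsConj (ofCoprodI w.prod : PushoutI φ) (ofCoprodI u.prod) := by
  obtain ⟨k, hk⟩ := hindex
  obtain rfl | hij := eq_or_ne i j
  · exact ⟨i, w, hw, .refl _⟩
  obtain rfl | hki := eq_or_ne k i
  · exact ⟨k, exists_reduced_isConj_of_index_ne_two hw hij hk⟩
  obtain rfl | hkj := eq_or_ne k j
  · obtain ⟨u, hu, hwu⟩ := exists_reduced_isConj_of_index_ne_two (reduced_inv hw) hij.symm hk
    obtain ⟨c, hc⟩ := isConj_iff.1 hwu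
    exact ⟨k, u.inv, reduced_inv hu, isConj_iff.2 ⟨c, by simp [← hc, mul_assoc]⟩⟩
  · obtain ⟨u, hu, -, hwu⟩ := exists_reduced_isConj_of_ne hw hki hkj (hproper k)
    exact ⟨k, u, hu, hwu⟩

lemma exists_reduced_isConj_length_eq [Nontrivial ι] (hproper : ∀ i, (φ i).range ≠ ⊤)
    {w : NeWord G i i} (hw : Reduced φ w.toWord) (n : ℕ) :
    ∃ k, ∃ u : NeWord G k k, Reduced φ u.toWord ∧
      u.toList.length = w.toList.length + 2 * n ∧
      IsConj (ofCoprodI w.prod : PushoutI φ) (ofCoprodI u.prod) := by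
  induction n with
  | zero => exact ⟨i, w, hw, rfl, .refl _⟩
  | succ n ih =>
    obtain ⟨k, u, hu, hlen, hwu⟩ := ih
    obtain ⟨l, hlk⟩ := exists_ne k
    obtain ⟨v, hv, hlen', huv⟩ := exists_reduced_isConj_of_ne hu hlk hlk (hproper l)
    exact ⟨l, v, hv, by omega, hwu.trans huv⟩

lemma infinite_conjugatesOf_of_notMem_range_base [Nontrivial ι]
    (hφ : ∀ i, Function.Injective (φ i)) (hproper : ∀ i, (φ i).range ≠ ⊤)
    (hindex : ∃ i, (φ i).range.index ≠ 2) {g : PushoutI φ} (hg : g ∉ (base φ).range) :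
    (conjugatesOf g).Infinite := by
  obtain ⟨i, j, w, hw, rfl⟩ := exists_reduced_of_notMem_range_base hφ hg
  obtain ⟨k, u, hu, hwu⟩ := exists_reduced_isConj_same_ends hproper hindex hw
  rw [hwu.conjugatesOf_eq]
  choose k' v hv hlen huv using exists_reduced_isConj_length_eq hproper hu
  refine Set.infinite_of_injective_forall_mem (f := fun n => ofCoprodI (v n).prod) ?_ huv
  intro m n hmn
  have hlength : (v m).toList.length = (v n).toList.length :=
    length_eq_of_reduced_of_prod_eq hφ (hv m) (hv n) hmn
  rw [hlen, hlen] at hlength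
  omega

lemma exists_isConj_base_notMem_range_base (hφ : ∀ i, Function.Injective (φ i)) {h : H}
    (hh : φ i h ∉ (φ i).range.normalCore) :
    ∃ g : PushoutI φ, IsConj (base φ h) g ∧ g ∉ (base φ).range := by
  obtain ⟨x, hx⟩ : ∃ x, x * φ i h * x⁻¹ ∉ (φ i).range := not_forall.1 hh
  refine ⟨of i (x * φ i h * x⁻¹), isConj_iff.2 ⟨of i x, by simp [of_apply_eq_base]⟩, ?_⟩
  rintro ⟨s, hs⟩
  rw [← of_apply_eq_base φ i] at hs
  exact hx ⟨s, of_injective hφ i hs⟩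

theorem isICC_pushoutI [Nontrivial ι] (hφ : ∀ i, Function.Injective (φ i))
    (hproper : ∀ i, (φ i).range ≠ ⊤) (hindex : ∃ i, (φ i).range.index ≠ 2)
    (hcore : ∀ h : H, h ≠ 1 → ∃ i, φ i h ∉ (φ i).range.normalCore) :
    IsICC (PushoutI φ) := by
  intro g hg
  by_cases hbase : g ∈ (base φ).range
  · obtain ⟨h, rfl⟩ := hbase
    obtain ⟨i, hi⟩ := hcore h (by rintro rfl; exact hg (map_one _))
    obtain ⟨x, hconj, hx⟩ := exists_isConj_base_notMem_range_base hφ hi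
    rw [hconj.conjugatesOf_eq]
    exact infinite_conjugatesOf_of_notMem_range_base hφ hproper hindex hx
  · exact infinite_conjugatesOf_of_notMem_range_base hφ hproper hindex hbase

end Amalgam

theorem isICC_pushoutI_famHom_of_normalCore_eq_bot {G : Type u} [Group G] {S : Subgroup G}
    (hS : S ≠ ⊥) (hcore : S.normalCore = ⊥) :
    IsICC (PushoutI (famHom S.subtype S.subtype)) := by
  have hnormal : ¬ S.Normal := fun _ => hS (S.normalCore_eq_self.symm.trans hcore)
  have hrange : S.subtype.range = S := S.range_subtype
  have hproper : S.subtype.range ≠ ⊤ := fun h =>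
    hnormal (by rw [← hrange, h]; infer_instance)
  have hindex : S.subtype.range.index ≠ 2 := fun h =>
    hnormal (Subgroup.normal_of_index_eq_two (hrange ▸ h))
  refine isICC_pushoutI (Bool.rec S.subtype_injective S.subtype_injective)
    (Bool.rec hproper hproper) ⟨true, hindex⟩ fun h hh => ⟨true, fun hmem => hh ?_⟩
  have hmem' : (h : G) ∈ S.normalCore := Subgroup.normalCore_mono hrange.le hmem
  simpa [hcore] using hmem'

section SpecialLinear

variable {n R : Type*} [Fintype n] [DecidableEq n] [CommRing R]

lemma row_vecMul_eq_smul_row_of_conj_apply_eq_zero {A B : Matrix.SpecialLinearGroup n R} {k : n}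
    (h : ∀ j ≠ k, (B * A * B⁻¹) k j = 0) :
    B k ᵥ* (A : Matrix n n R) = (B * A * B⁻¹) k k • B k := by
  have hconj : (B * A * B⁻¹) k = Pi.single k ((B * A * B⁻¹) k k) :=
    funext fun j => by
      obtain rfl | hj := eq_or_ne j k
      · simp
      · simp [hj, h j hj]
  calc B k ᵥ* (A : Matrix n n R) = (B * A) k := by
        rw [Matrix.SpecialLinearGroup.coe_mul, Matrix.mul_apply_eq_vecMul]
    _ = (B * A * B⁻¹ * B) k := by rw [inv_mul_cancel_right]
    _ = (B * A * B⁻¹) k ᵥ* (B : Matrix n n R) := by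
        rw [Matrix.SpecialLinearGroup.coe_mul (B * A * B⁻¹), Matrix.mul_apply_eq_vecMul]
    _ = (B * A * B⁻¹) k k • B k := by
        rw [hconj]
        ext l
        simp

lemma transvection_row_fst {i j : n} (hij : i ≠ j) (b : R) :
    Matrix.SpecialLinearGroup.transvection hij b i = Pi.single i 1 + Pi.single j b := by
  ext l
  simp [Matrix.SpecialLinearGroup.transvection_coe, Matrix.single_apply, Matrix.one_apply,
    Pi.single_apply, eq_comm]

lemma transvection_row_of_ne {i j k : n} (hij : i ≠ j) (hki : k ≠ i) (b : R) :
    Matrix.SpecialLinearGroup.transvection hij b k = Pi.single k 1 := by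
  ext l
  simp [Matrix.SpecialLinearGroup.transvection_coe, Matrix.one_apply,
    Pi.single_apply, eq_comm, hki.symm]

lemma exists_row_eq_single (j k : n) :
    ∃ B : Matrix.SpecialLinearGroup n R, B k = Pi.single j 1 := by
  obtain rfl | hjk := eq_or_ne j k
  · exact ⟨1, by ext l; simp [Matrix.one_apply, Pi.single_apply, eq_comm]⟩
  · refine ⟨.transvection hjk.symm 1 * .transvection hjk (-1), ?_⟩
    rw [Matrix.SpecialLinearGroup.coe_mul, Matrix.mul_apply_eq_vecMul, transvection_row_fst]
    simp [add_vecMul, row_def, transvection_row_fst, transvection_row_of_ne hjk hjk.symm,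
      Pi.single_neg]

lemma mem_center_of_forall_conj_apply_eq_zero {A : Matrix.SpecialLinearGroup n R} {k : n}
    (h : ∀ B : Matrix.SpecialLinearGroup n R, ∀ j ≠ k, (B * A * B⁻¹) k j = 0) :
    A ∈ Subgroup.center (Matrix.SpecialLinearGroup n R) := by
  have heigen (v : n → R) (hv : ∃ B : Matrix.SpecialLinearGroup n R, B k = v) :
      ∃ c : R, v ᵥ* (A : Matrix n n R) = c • v := by
    obtain ⟨B, rfl⟩ := hv
    exact ⟨_, row_vecMul_eq_smul_row_of_conj_apply_eq_zero (h B)⟩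
  have hoffdiag (j l : n) (hlj : l ≠ j) : A j l = 0 := by
    obtain ⟨c, hc⟩ := heigen _ (exists_row_eq_single j k)
    simpa [hlj] using congrFun hc l
  have hdiag (j : n) : A j j = A k k := by
    obtain rfl | hjk := eq_or_ne j k
    · rfl
    obtain ⟨c, hc⟩ := heigen _ ⟨_, transvection_row_fst hjk.symm 1⟩
    have hk : A k k = c := by
      simpa [add_vecMul, hoffdiag j k hjk.symm, hjk.symm] using congrFun hc k
    have hj : A j j = c := by
      simpa [add_vecMul, hoffdiag k j hjk, hjk] using congrFun hc j
    rw [hj, hk]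
  have hscalar : scalar n (A k k) = (A : Matrix n n R) := by
    ext j l
    obtain rfl | hlj := eq_or_ne l j
    · simp [hdiag]
    · simp [hlj.symm, hoffdiag j l hlj]
  refine Matrix.SpecialLinearGroup.mem_center_iff.2 ⟨A k k, ?_, hscalar⟩
  simpa using congrArg det hscalar

end SpecialLinear

lemma center_specialLinearGroup_eq_bot_of_odd_card {n R : Type*} [Fintype n] [DecidableEq n]
    [CommRing R] [LinearOrder R] [IsStrictOrderedRing R] (hn : Odd (Fintype.card n)) :
    Subgroup.center (Matrix.SpecialLinearGroup n R) = ⊥ := by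
  refine (Subgroup.eq_bot_iff_forall _).2 fun A hA => ?_
  obtain ⟨r, hr, hrA⟩ := Matrix.SpecialLinearGroup.mem_center_iff.1 hA
  obtain rfl : r = 1 := hn.pow_inj.1 (hr.trans (one_pow _).symm)
  exact Subtype.ext (by simp [← hrA])

lemma normalCore_sigma3_eq_bot : Sigma3.normalCore = ⊥ := by
  rw [eq_bot_iff, ← center_specialLinearGroup_eq_bot_of_odd_card (by decide)]
  refine fun A hA => mem_center_of_forall_conj_apply_eq_zero (k := 2) fun B j hj => ?_
  obtain ⟨h0, h1⟩ : B * A * B⁻¹ ∈ Sigma3 := hA B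
  fin_cases j
  exacts [h0, h1, absurd rfl hj]

lemma sigma3_ne_bot : Sigma3 ≠ ⊥ := by
  intro h
  have hmem : Matrix.SpecialLinearGroup.transvection (zero_ne_one (α := Fin 3)) (1 : ℤ) ∈ Sigma3 :=
    ⟨by simp [Matrix.SpecialLinearGroup.transvection_coe],
      by simp [Matrix.SpecialLinearGroup.transvection_coe]⟩
  rw [h, Subgroup.mem_bot] at hmem
  simpa [Matrix.SpecialLinearGroup.transvection_coe] using congrArg (fun A => A 0 1) hmem

/-- The amalgamated free product `Γ = SL(3,ℤ) *_Σ SL(3,ℤ)` is an ICC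
group: every `g ≠ e` in `Γ` has an infinite conjugacy class. -/
theorem stmt12
    (g : Monoid.PushoutI (famHom Sigma3.subtype Sigma3.subtype)) (hg : g ≠ 1) :
    {x : Monoid.PushoutI (famHom Sigma3.subtype Sigma3.subtype) |
      ∃ h, h * g * h⁻¹ = x}.Infinite := by
  simpa only [conjugatesOf, isConj_iff] using
    isICC_pushoutI_famHom_of_normalCore_eq_bot sigma3_ne_bot normalCore_sigma3_eq_bot g hg
end
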